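/- Geometric moments of the pessimist covariance are finite in the natural distance: let A be an invertible real n×n matrix, W a real n×n positive definite symmetric matrix, Q a real n×n positive semidefinite symmetric matrix, and γ̄ ∈ (0,1). Define M(j) = A^j W (Aᵀ)^j + ∑_{i=0}^{j−1} A^i Q (Aᵀ)^i for j ∈ ℕ. Then the series ∑_{j=0}^∞ γ̄·(1−γ̄)^j · ∑_{i=1}^n (log λᵢ(M(j)))² converges, where λ₁(M(j)),…,λₙ(M(j)) are the eigenvalues of the positive definite symmetric matrix M(j). -/

import Mathlib

open Matrix

noncomputable def matEigs {n : ℕ} (M : Matrix (Fin n) (Fin n) ℝ) : Fin n → ℝ := by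
  classical exact if h : M.IsHermitian then h.eigenvalues else 0

open scoped ComplexOrder in
/-- The positive semidefinite square root of a positive semidefinite matrix
(the definition of the older Mathlib, which has since been removed). -/
noncomputable def Matrix.PosSemidef.sqrt {n 𝕜 : Type*} [Fintype n] [RCLike 𝕜] [DecidableEq n]
    {A : Matrix n n 𝕜} (hA : A.PosSemidef) : Matrix n n 𝕜 :=
  hA.1.eigenvectorUnitary.1 * diagonal (((↑) : ℝ → 𝕜) ∘ Real.sqrt ∘ hA.1.eigenvalues) *
    (star hA.1.eigenvectorUnitary : Matrix n n 𝕜)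

noncomputable def matSqrt {n : ℕ} (M : Matrix (Fin n) (Fin n) ℝ) :
    Matrix (Fin n) (Fin n) ℝ := by
  classical exact if h : M.PosSemidef then h.sqrt else 0

/-- The natural (Fisher / affine-invariant) distance on positive definite
matrices: `d(P₁,P₂) = (∑ᵢ (log λᵢ)²)^{1/2}` where `λᵢ` are the eigenvalues of
`P₂^{-1/2} P₁ P₂^{-1/2}`. -/
noncomputable def natDist {n : ℕ} (P₁ P₂ : Matrix (Fin n) (Fin n) ℝ) : ℝ :=
  Real.sqrt (∑ i : Fin n,
    Real.log (matEigs ((matSqrt P₂)⁻¹ * P₁ * (matSqrt P₂)⁻¹) i) ^ 2)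

/-!
In the Loewner order, `M (j + 1) = A * M j * Aᴴ + Q` together with `A * Aᴴ ≤ d` gives
`M j ≤ c * (1 + d) ^ j`, and `b ≤ A * Aᴴ` with `0 ≤ Q` gives `a * b ^ j ≤ M j`, with `a` and `b`
positive because `W` and `A * Aᴴ` are positive definite. So the eigenvalues of `M j` are squeezed
between two geometric sequences, their logarithms are `O(j)`, and `∑ j, j ^ 2 * (1 - γ) ^ j`
converges.
-/

open Filter Asymptotics
open scoped MatrixOrder

section GeometricBounds

lemma isBigO_log_mul_pow {a b : ℝ} (ha : 0 < a) (hb : 0 < b) :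
    (fun j : ℕ ↦ Real.log (a * b ^ j)) =O[atTop] (fun j : ℕ ↦ (j : ℝ)) := by
  have hlog (j : ℕ) : Real.log (a * b ^ j) = Real.log a + Real.log b * j := by
    rw [Real.log_mul ha.ne' (pow_pos hb j).ne', Real.log_pow, mul_comm (j : ℝ)]
  have hconst : (fun _ : ℕ ↦ Real.log a) =o[atTop] (fun j : ℕ ↦ (j : ℝ)) :=
    isLittleO_const_left.2 <| .inr <| tendsto_norm_atTop_atTop.comp tendsto_natCast_atTop_atTop
  simpa only [hlog] using hconst.add_isBigO (isBigO_const_mul_self _ _ _)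

lemma isBigO_log_of_mul_pow_le_of_le_mul_pow {a b c d : ℝ} {x : ℕ → ℝ}
    (ha : 0 < a) (hb : 0 < b) (hc : 0 < c) (hd : 0 < d)
    (hlower : ∀ j, a * b ^ j ≤ x j) (hupper : ∀ j, x j ≤ c * d ^ j) :
    (fun j ↦ Real.log (x j)) =O[atTop] (fun j ↦ (j : ℝ)) := by
  refine .trans (.of_norm_le fun j ↦ ?_)
    ((isBigO_log_mul_pow ha hb).norm_left.add (isBigO_log_mul_pow hc hd).norm_left)
  have hpos : 0 < a * b ^ j := by positivity
  calc |Real.log (x j)|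
      ≤ max |Real.log (a * b ^ j)| |Real.log (c * d ^ j)| :=
        abs_le_max_abs_abs (Real.log_le_log hpos (hlower j))
          (Real.log_le_log (hpos.trans_le (hlower j)) (hupper j))
    _ ≤ |Real.log (a * b ^ j)| + |Real.log (c * d ^ j)| :=
        max_le_add_of_nonneg (abs_nonneg _) (abs_nonneg _)

end GeometricBounds

section PessimistCovariance

/-- The covariance `M j` reached after `j` steps of the recursion `X ↦ A * X * star A + Q` started
at `W`, written in closed form. It is stated in an arbitrary star ring, of which real matrices with
`star A = Aᵀ` are the case of the paper. -/
def pessimistCovariance {R : Type*} [Semiring R] [Star R] (A W Q : R) (j : ℕ) : R :=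
  A ^ j * W * star A ^ j + ∑ l ∈ Finset.range j, A ^ l * Q * star A ^ l

section Semiring

variable {R : Type*} [Semiring R] [Star R]

lemma pessimistCovariance_zero (A W Q : R) : pessimistCovariance A W Q 0 = W := by
  simp [pessimistCovariance]

lemma pessimistCovariance_succ (A W Q : R) (j : ℕ) :
    pessimistCovariance A W Q (j + 1) = A * pessimistCovariance A W Q j * star A + Q := by
  simp only [pessimistCovariance, Finset.sum_range_succ', mul_add, add_mul, Finset.mul_sum,
    Finset.sum_mul, pow_succ' A, pow_succ (star A), pow_zero, one_mul, mul_one, mul_assoc,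
    add_assoc]

end Semiring

section StarOrderedRing

variable {R : Type*} [Ring R] [StarRing R] [PartialOrder R] [StarOrderedRing R]
  [Algebra ℝ R] [StarModule ℝ R] {A P W Q : R}

lemma algebraMap_mul_le_mul_mul_star {x b : ℝ} (hx : 0 ≤ x)
    (hP : algebraMap ℝ R x ≤ P) (hA : algebraMap ℝ R b ≤ A * star A) :
    algebraMap ℝ R (x * b) ≤ A * P * star A :=
  calc algebraMap ℝ R (x * b)
      = x • algebraMap ℝ R b := by rw [map_mul, Algebra.smul_def]
    _ ≤ x • (A * star A) := smul_le_smul_of_nonneg_left hA hx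
    _ = A * algebraMap ℝ R x * star A := by simp [Algebra.algebraMap_eq_smul_one]
    _ ≤ A * P * star A := star_right_conjugate_le_conjugate hP A

lemma mul_mul_star_le_algebraMap_mul {x d : ℝ} (hx : 0 ≤ x)
    (hP : P ≤ algebraMap ℝ R x) (hA : A * star A ≤ algebraMap ℝ R d) :
    A * P * star A ≤ algebraMap ℝ R (x * d) :=
  calc A * P * star A
      ≤ A * algebraMap ℝ R x * star A := star_right_conjugate_le_conjugate hP A
    _ = x • (A * star A) := by simp [Algebra.algebraMap_eq_smul_one]
    _ ≤ x • algebraMap ℝ R d := smul_le_smul_of_nonneg_left hA hx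
    _ = algebraMap ℝ R (x * d) := by rw [map_mul, Algebra.smul_def]

lemma algebraMap_mul_pow_le_pessimistCovariance {a b : ℝ} (ha : 0 ≤ a) (hb : 0 ≤ b)
    (hW : algebraMap ℝ R a ≤ W) (hA : algebraMap ℝ R b ≤ A * star A) (hQ : 0 ≤ Q) (j : ℕ) :
    algebraMap ℝ R (a * b ^ j) ≤ pessimistCovariance A W Q j := by
  induction j with
  | zero => simpa [pessimistCovariance_zero] using hW
  | succ j ih =>
    rw [pessimistCovariance_succ, pow_succ, ← mul_assoc]
    exact le_add_of_le_of_nonneg (algebraMap_mul_le_mul_mul_star (by positivity) ih hA) hQ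

lemma pessimistCovariance_le_algebraMap_mul_pow {c d : ℝ} (hc : 0 ≤ c) (hd : 0 ≤ d)
    (hW : W ≤ algebraMap ℝ R c) (hA : A * star A ≤ algebraMap ℝ R d)
    (hQ : Q ≤ algebraMap ℝ R c) (j : ℕ) :
    pessimistCovariance A W Q j ≤ algebraMap ℝ R (c * (1 + d) ^ j) := by
  induction j with
  | zero => simpa [pessimistCovariance_zero] using hW
  | succ j ih =>
    have hpow : 1 ≤ (1 + d) ^ j := one_le_pow₀ (by linarith)
    calc pessimistCovariance A W Q (j + 1)
        = A * pessimistCovariance A W Q j * star A + Q := pessimistCovariance_succ A W Q j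
      _ ≤ algebraMap ℝ R (c * (1 + d) ^ j * d) + algebraMap ℝ R c :=
          add_le_add (mul_mul_star_le_algebraMap_mul (by positivity) ih hA) hQ
      _ = algebraMap ℝ R (c * (1 + d) ^ j * d + c) := (map_add _ _ _).symm
      _ ≤ algebraMap ℝ R (c * (1 + d) ^ (j + 1)) := by
          refine algebraMap_mono R ?_
          rw [pow_succ]
          linarith [le_mul_of_one_le_right hc hpow]

end StarOrderedRing

section FunctionalCalculus

variable {R : Type*} [TopologicalSpace R] [Ring R] [StarRing R] [PartialOrder R]
  [StarOrderedRing R] [Algebra ℝ R] [NonnegSpectrumClass ℝ R]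
  [ContinuousFunctionalCalculus ℝ R IsSelfAdjoint]

lemma exists_pos_algebraMap_le_of_isStrictlyPositive {a : R} (ha : IsStrictlyPositive a) :
    ∃ r > 0, algebraMap ℝ R r ≤ a := by
  rcases subsingleton_or_nontrivial R with _ | _
  · exact ⟨1, one_pos, (Subsingleton.elim _ _).le⟩
  · exact (CFC.exists_pos_algebraMap_le_iff ha.isSelfAdjoint).2 fun _ ↦ ha.spectrum_pos

lemma eventually_le_algebraMap_of_isSelfAdjoint {a : R} (ha : IsSelfAdjoint a) :
    ∀ᶠ r in atTop, a ≤ algebraMap ℝ R r := by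
  obtain ⟨s, hs⟩ := (ContinuousFunctionalCalculus.isCompact_spectrum (R := ℝ) a).bddAbove
  filter_upwards [eventually_ge_atTop s] with r hr
  exact (le_algebraMap_iff_spectrum_le ha).2 fun x hx ↦ (hs hx).trans hr

variable [StarModule ℝ R] {A W Q : R}

lemma exists_algebraMap_mul_pow_le_pessimistCovariance
    (hA : IsUnit A) (hW : IsStrictlyPositive W) (hQ : 0 ≤ Q) :
    ∃ a > 0, ∃ b > 0, ∀ j, algebraMap ℝ R (a * b ^ j) ≤ pessimistCovariance A W Q j := by
  have hAA : IsStrictlyPositive (A * star A) :=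
    (hA.mul hA.star).isStrictlyPositive (mul_star_self_nonneg A)
  obtain ⟨a, ha, haW⟩ := exists_pos_algebraMap_le_of_isStrictlyPositive hW
  obtain ⟨b, hb, hbA⟩ := exists_pos_algebraMap_le_of_isStrictlyPositive hAA
  exact ⟨a, ha, b, hb, algebraMap_mul_pow_le_pessimistCovariance ha.le hb.le haW hbA hQ⟩

lemma exists_pessimistCovariance_le_algebraMap_mul_pow (A : R)
    (hW : IsSelfAdjoint W) (hQ : IsSelfAdjoint Q) :
    ∃ c > 0, ∃ d > 0, ∀ j, pessimistCovariance A W Q j ≤ algebraMap ℝ R (c * d ^ j) := by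
  obtain ⟨c, hc, hcW, hcQ⟩ := ((eventually_gt_atTop 0).and
    ((eventually_le_algebraMap_of_isSelfAdjoint hW).and
      (eventually_le_algebraMap_of_isSelfAdjoint hQ))).exists
  obtain ⟨d, hd, hdA⟩ := ((eventually_ge_atTop 0).and
    (eventually_le_algebraMap_of_isSelfAdjoint (.mul_star_self A))).exists
  exact ⟨c, hc, 1 + d, by positivity,
    pessimistCovariance_le_algebraMap_mul_pow hc.le hd hcW hdA hcQ⟩

end FunctionalCalculus

end PessimistCovariance

section Eigenvalues

open scoped ComplexOrder

variable {ι 𝕜 : Type*} [Fintype ι] [DecidableEq ι] [RCLike 𝕜] {A W Q : Matrix ι ι 𝕜}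

lemma posDef_pessimistCovariance (hA : IsUnit A) (hW : W.PosDef) (hQ : Q.PosSemidef) (j : ℕ) :
    (pessimistCovariance A W Q j).PosDef := by
  induction j with
  | zero => rwa [pessimistCovariance_zero]
  | succ j ih =>
    rw [pessimistCovariance_succ]
    exact (hA.isStrictlyPositive_star_right_conjugate_iff.2 ih.isStrictlyPositive).posDef
      |>.add_posSemidef hQ

lemma isBigO_log_eigenvalues_pessimistCovariance
    (hA : IsUnit A) (hW : W.PosDef) (hQ : Q.PosSemidef) (i : ι) :
    (fun j ↦ Real.log ((posDef_pessimistCovariance hA hW hQ j).isHermitian.eigenvalues i))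
      =O[atTop] (fun j ↦ (j : ℝ)) := by
  have hM (j : ℕ) : (pessimistCovariance A W Q j).IsHermitian :=
    (posDef_pessimistCovariance hA hW hQ j).isHermitian
  obtain ⟨a, ha, b, hb, hlower⟩ :=
    exists_algebraMap_mul_pow_le_pessimistCovariance hA hW.isStrictlyPositive hQ.nonneg
  obtain ⟨c, hc, d, hd, hupper⟩ :=
    exists_pessimistCovariance_le_algebraMap_mul_pow A hW.isHermitian hQ.isHermitian
  exact isBigO_log_of_mul_pow_le_of_le_mul_pow ha hb hc hd
    (fun j ↦ (algebraMap_le_iff_le_spectrum (hM j)).1 (hlower j) _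
      ((hM j).eigenvalues_mem_spectrum_real i))
    (fun j ↦ (le_algebraMap_iff_spectrum_le (hM j)).1 (hupper j) _
      ((hM j).eigenvalues_mem_spectrum_real i))

theorem summable_geometric_log_sq_eigs_general
    (hA : IsUnit A) (hW : W.PosDef) (hQ : Q.PosSemidef) {r : ℝ} (hr : ‖r‖ < 1) :
    Summable fun j : ℕ ↦ r ^ j *
      ∑ i, Real.log ((posDef_pessimistCovariance hA hW hQ j).isHermitian.eigenvalues i) ^ 2 := by
  refine summable_of_isBigO_nat (summable_pow_mul_geometric_of_norm_lt_one 2 hr) ?_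
  simp only [mul_comm (r ^ _)]
  exact (IsBigO.fun_sum fun i _ ↦
    (isBigO_log_eigenvalues_pessimistCovariance hA hW hQ i).pow 2).mul (isBigO_refl _ _)

end Eigenvalues

lemma matEigs_eq_eigenvalues {n : ℕ} {M : Matrix (Fin n) (Fin n) ℝ} (hM : M.IsHermitian) :
    matEigs M = hM.eigenvalues :=
  dif_pos hM

/-- Geometric moments of the pessimist covariance are finite
in the natural distance: with `M(j) = Aʲ W (Aᵀ)ʲ + ∑_{i<j} Aⁱ Q (Aᵀ)ⁱ`, the
series `∑ⱼ γ̄·(1−γ̄)ʲ·∑ᵢ (log λᵢ(M(j)))²` converges. -/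
theorem summable_geometric_log_sq_eigs
    {n : ℕ} (A W Q : Matrix (Fin n) (Fin n) ℝ)
    (hA : IsUnit A.det) (hW : W.PosDef) (hQ : Q.PosSemidef)
    (γ : ℝ) (hγ : γ ∈ Set.Ioo (0 : ℝ) 1) :
    Summable (fun j : ℕ =>
      γ * (1 - γ) ^ j *
        ∑ i : Fin n,
          Real.log (matEigs
            (A ^ j * W * Aᵀ ^ j + ∑ l ∈ Finset.range j, A ^ l * Q * Aᵀ ^ l) i) ^ 2) := by
  have hA' : IsUnit A := (isUnit_iff_isUnit_det A).2 hA
  have hr : ‖1 - γ‖ < 1 := abs_lt.2 ⟨by linarith [hγ.2], by linarith [hγ.1]⟩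
  have hEigs (j : ℕ) :
      matEigs (A ^ j * W * Aᵀ ^ j + ∑ l ∈ Finset.range j, A ^ l * Q * Aᵀ ^ l) =
        (posDef_pessimistCovariance hA' hW hQ j).isHermitian.eigenvalues := by
    rw [← matEigs_eq_eigenvalues, pessimistCovariance, star_eq_conjTranspose,
      conjTranspose_eq_transpose_of_trivial]
  simpa only [hEigs, mul_assoc γ] using
    (summable_geometric_log_sq_eigs_general hA' hW hQ hr).mul_left γ
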